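/- Write $\overline{\mathbb R}=[-\infty,\infty]$, with the conventions $0\cdot\infty=0$ and $\infty+(-\infty)=\infty$. An outer probability content on a set $Y$ is a functional $\mathcal E$ that assigns to every function $f:Y\to\overline{\mathbb R}$ a value $\mathcal E(f)\in\overline{\mathbb R}$ such that, for all $f,g:Y\to\overline{\mathbb R}$: (1) $\mathcal E(f)\le\mathcal E(g)$ whenever $f\le g$ pointwise; (2) $\mathcal E(cf)=c\,\mathcal E(f)$ for every real $c>0$; (3) $\mathcal E(f+g)\le\mathcal E(f)+\mathcal E(g)$; (4) $\mathcal E(c)=c$ for every real constant function $c$. It is a superexpectation if moreover (5) $\mathcal E\bigl(\sum_{k=1}^\infty f_k\bigr)\le\sum_{k=1}^\infty\mathcal E(f_k)$ for every sequence of functions $f_k:Y\to[0,\infty]$. Let $X$ be a nonempty set and let $\mathcal E_1,\mathcal E_2,\dots$ be superexpectations on $X$. Let $\Omega=X^\infty$ be the set of infinite sequences from $X$; its subsets are called events. A situation is a finite sequence $s\in X^*$, $\Gamma(s)\subseteq\Omega$ is the set of infinite sequences extending $s$, and $\omega^n$ is the prefix of length $n$ of $\omega\in\Omega$. A supermartingale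 is a function $S:X^*\to\overline{\mathbb R}$ such that $\mathcal E_n(x\mapsto S(sx))\le S(s)$ for every $n\ge1$ and every situation $s$ of length $n-1$. For $\xi:\Omega\to\overline{\mathbb R}$ and a situation $s$, let $\overline{\mathbb E}(\xi\mid s)$ be the infimum of $S(s)$ over all supermartingales $S$ that are bounded below by a real constant and satisfy $\liminf_{n\to\infty}S(\omega^n)\ge\xi(\omega)$ for all $\omega\in\Gamma(s)$; for an event $A$, let $\overline{\mathbb P}(A\mid s)=\overline{\mathbb E}(\mathbf 1_A\mid s)$. Then for every situation $s$ the functional $\xi\mapsto\overline{\mathbb E}(\xi\mid s)$ is a superexpectation on $\Omega$. In particular, $\overline{\mathbb E}\bigl(\sum_{k=1}^\infty\xi_k\mid s\bigr)\le\sum_{k=1}^\infty\overline{\mathbb E}(\xi_k\mid s)$ for every sequence of functions $\xi_k:\Omega\to[0,\infty]$, and consequently $\overline{\mathbb P}\bigl(\bigcup_{k=1}^\infty A_k\mid s\bigr)\le\sum_{k=1}^\infty\overline{\mathbb P}(A_k\mid s)$ for every sequence of events $A_k\subseteq\Omega$; hence, if $\overline{\mathbb P}(A_k\mid s)=0$ for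 all $k$, then $\overline{\mathbb P}\bigl(\bigcup_{k=1}^\infty A_k\mid s\bigr)=0$. -/

import Mathlib

namespace GTP

noncomputable section

open Filter Topology

/-- Addition on `[-∞, ∞]` with the convention `∞ + (-∞) = ∞`.
(The addition of `EReal` itself has `⊤ + ⊥ = ⊥`; the two agree on all other pairs.) -/
def upAdd (a b : EReal) : EReal := -(-a + -b)

theorem top_upAdd (b : EReal) : upAdd ⊤ b = ⊤ := by simp [upAdd]

theorem upAdd_top (a : EReal) : upAdd a ⊤ = ⊤ := by simp [upAdd]

theorem upAdd_eq_add {a b : EReal} (h1 : a ≠ ⊥ ∨ b ≠ ⊤) (h2 : a ≠ ⊤ ∨ b ≠ ⊥) :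
    upAdd a b = a + b := by
  unfold upAdd
  rw [EReal.neg_add (by simpa using h2) (by simpa using h1), sub_eq_add_neg, neg_neg, neg_neg]

/-- An *outer probability content* on `Y`: a functional on all functions `Y → [-∞, ∞]` that is
monotone, positively homogeneous, subadditive (sums being taken with `∞ + (-∞) = ∞`, both
pointwise and on the values), and that maps every real constant to itself. -/
def IsOPC {Y : Type*} (E : (Y → EReal) → EReal) : Prop :=
  (∀ f g : Y → EReal, (∀ y, f y ≤ g y) → E f ≤ E g) ∧
  (∀ c : ℝ, 0 < c → ∀ f : Y → EReal, E (fun y => (c : EReal) * f y) = (c : EReal) * E f) ∧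
  (∀ f g : Y → EReal, E (fun y => upAdd (f y) (g y)) ≤ upAdd (E f) (E g)) ∧
  (∀ c : ℝ, E (fun _ => (c : EReal)) = (c : EReal))

/-- The sum of a series of nonnegative extended reals, as the supremum of its partial sums.
It is only applied to nonnegative terms. -/
def eseries (a : ℕ → EReal) : EReal := ⨆ n, ∑ k ∈ Finset.range n, a k

theorem tendsto_eseries {a : ℕ → EReal} (ha : ∀ k, 0 ≤ a k) :
    Tendsto (fun n => ∑ k ∈ Finset.range n, a k) atTop (𝓝 (eseries a)) := by
  refine tendsto_atTop_iSup (monotone_nat_of_le_succ fun n => ?_)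
  rw [Finset.sum_range_succ]
  exact le_add_of_nonneg_right (ha n)

/-- A *superexpectation*: an outer probability content that is moreover countably subadditive
on nonnegative functions. -/
def IsSuperexpectation {Y : Type*} (E : (Y → EReal) → EReal) : Prop :=
  IsOPC E ∧
  ∀ f : ℕ → Y → EReal, (∀ k y, 0 ≤ f k y) →
    E (fun y => eseries fun k => f k y) ≤ eseries fun k => E (f k)

/-- The length-`n` prefix `ω^n` of a sequence `ω ∈ Ω = X^∞`. -/
def pre {X : Type*} (ω : ℕ → X) (n : ℕ) : List X := List.ofFn fun i : Fin n => ω i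

/-- `Γ(s)`: the set of infinite extensions of the situation `s`. -/
def Gamma {X : Type*} (s : List X) : Set (ℕ → X) := {ω | pre ω s.length = s}

/-- A *supermartingale*. Here `E n` governs the trial that follows a situation of length `n`,
so that `E 0, E 1, …` are `E_1, E_2, …` of the usual numbering. -/
def IsSupermartingale {X : Type*} (E : ℕ → (X → EReal) → EReal) (S : List X → EReal) : Prop :=
  ∀ s : List X, E s.length (fun x => S (s ++ [x])) ≤ S s

/-- An extended-real-valued function that is bounded below by a real constant. -/
def BddBelowFn {Y : Type*} (S : Y → EReal) : Prop := ∃ c : ℝ, ∀ t, (c : EReal) ≤ S t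

/-- The conditional upper expectation `Ē(ξ | s)`. -/
def upExp {X : Type*} (E : ℕ → (X → EReal) → EReal) (ξ : (ℕ → X) → EReal) (s : List X) : EReal :=
  sInf {a | ∃ S : List X → EReal, IsSupermartingale E S ∧ BddBelowFn S ∧
    (∀ ω ∈ Gamma s, ξ ω ≤ liminf (fun n => S (pre ω n)) atTop) ∧ S s = a}

/-- The conditional upper probability `P̄(A | s)`: the upper expectation of the indicator. -/
def upProb {X : Type*} (E : ℕ → (X → EReal) → EReal) (A : Set (ℕ → X)) (s : List X) : EReal :=
  upExp E (A.indicator fun _ => 1) s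

end

end GTP

namespace GTP

open Filter Topology

section Series

theorem eseries_mono {a b : ℕ → EReal} (h : ∀ k, a k ≤ b k) : eseries a ≤ eseries b :=
  iSup_mono fun _ => Finset.sum_le_sum fun k _ => h k

theorem sum_range_le_eseries (a : ℕ → EReal) (n : ℕ) :
    ∑ k ∈ Finset.range n, a k ≤ eseries a :=
  le_iSup (fun n => ∑ k ∈ Finset.range n, a k) n

theorem eseries_nonneg (a : ℕ → EReal) : 0 ≤ eseries a := by
  simpa using sum_range_le_eseries a 0

theorem le_eseries {a : ℕ → EReal} (ha : ∀ k, 0 ≤ a k) (k : ℕ) : a k ≤ eseries a := by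
  refine le_trans ?_ (sum_range_le_eseries a (k + 1))
  exact Finset.single_le_sum (f := a) (fun i _ => ha i) (Finset.self_mem_range_succ k)

theorem coe_sum_range (r : ℕ → ℝ) (n : ℕ) :
    ((∑ k ∈ Finset.range n, r k : ℝ) : EReal) = ∑ k ∈ Finset.range n, (r k : EReal) := by
  induction n with
  | zero => simp
  | succ n ih => rw [Finset.sum_range_succ, Finset.sum_range_succ, EReal.coe_add, ih]

theorem eseries_le_add {a b : ℕ → EReal} {r : ℕ → ℝ} {ε : ℝ}
    (h : ∀ k, a k ≤ b k + r k) (hr : ∀ n, ∑ k ∈ Finset.range n, r k ≤ ε) :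
    eseries a ≤ eseries b + ε := by
  refine iSup_le fun n => ?_
  calc ∑ k ∈ Finset.range n, a k
      ≤ ∑ k ∈ Finset.range n, (b k + r k) := Finset.sum_le_sum fun k _ => h k
    _ = ∑ k ∈ Finset.range n, b k + ((∑ k ∈ Finset.range n, r k : ℝ) : EReal) := by
        rw [Finset.sum_add_distrib, coe_sum_range]
    _ ≤ eseries b + ε :=
        add_le_add (sum_range_le_eseries b n) (EReal.coe_le_coe_iff.2 (hr n))

theorem sum_liminf_le {u : ℕ → ℕ → EReal} (n : ℕ) :
    ∑ k ∈ Finset.range n, liminf (u k) atTop ≤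
      liminf (fun m => ∑ k ∈ Finset.range n, u k m) atTop := by
  induction n with
  | zero => simp
  | succ n ih =>
    simp only [Finset.sum_range_succ]
    exact (add_le_add_left ih _).trans EReal.le_liminf_add

/-- Fatou's lemma for series. -/
theorem eseries_liminf_le (u : ℕ → ℕ → EReal) :
    eseries (fun k => liminf (u k) atTop) ≤ liminf (fun m => eseries fun k => u k m) atTop :=
  iSup_le fun n => (sum_liminf_le n).trans
    (liminf_le_liminf (.of_forall fun m => sum_range_le_eseries (fun k => u k m) n))

end Series

section UpAdd

theorem upAdd_mono {a b a' b' : EReal} (ha : a ≤ a') (hb : b ≤ b') :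
    upAdd a b ≤ upAdd a' b' :=
  EReal.neg_le_neg_iff.2 (add_le_add (EReal.neg_le_neg_iff.2 ha) (EReal.neg_le_neg_iff.2 hb))

theorem upAdd_eq_add_of_ne_bot {a b : EReal} (ha : a ≠ ⊥) (hb : b ≠ ⊥) : upAdd a b = a + b :=
  upAdd_eq_add (.inl ha) (.inr hb)

theorem le_upAdd_of_forall_gt {a b c : EReal} (h : ∀ a' > a, ∀ b' > b, c ≤ a' + b') :
    c ≤ upAdd a b := by
  rcases eq_or_ne a ⊤ with rfl | ha
  · simp [top_upAdd]
  rcases eq_or_ne b ⊤ with rfl | hb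
  · simp [upAdd_top]
  rw [upAdd_eq_add (.inr hb) (.inl ha)]
  exact EReal.le_add_of_forall_gt (.inr hb) (.inl ha) h

theorem ne_bot_of_coe_le {c : ℝ} {a : EReal} (h : (c : EReal) ≤ a) : a ≠ ⊥ :=
  ((EReal.bot_lt_coe c).trans_le h).ne'

end UpAdd

section Prefix

variable {X : Type*}

@[simp] theorem length_pre (ω : ℕ → X) (n : ℕ) : (pre ω n).length = n := by simp [pre]

theorem pre_isPrefix_pre (ω : ℕ → X) {m n : ℕ} (h : m ≤ n) : pre ω m <+: pre ω n := by
  rw [List.prefix_iff_eq_take]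
  refine List.ext_getElem (by simp [h]) fun i h₁ h₂ => by simp [pre]

theorem Gamma_anti {s t : List X} (h : s <+: t) : Gamma t ⊆ Gamma s := by
  intro ω (hω : pre ω t.length = t)
  have h₁ : pre ω s.length <+: t := by
    simpa [hω] using pre_isPrefix_pre ω h.length_le
  exact (List.prefix_of_prefix_length_le h₁ h (by simp)).eq_of_length (by simp)

/-- A situation can be extended indefinitely by a rule selecting the next outcome. -/
theorem exists_mem_Gamma_forall (g : List X → X) (s : List X) :
    ∃ ω ∈ Gamma s, ∀ n ≥ s.length, pre ω (n + 1) = pre ω n ++ [g (pre ω n)] := by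
  obtain ⟨u, hu0, hu⟩ : ∃ u : ℕ → List X, u 0 = s ∧ ∀ k, u (k + 1) = u k ++ [g (u k)] :=
    ⟨fun k => Nat.rec s (fun _ t => t ++ [g t]) k, rfl, fun _ => rfl⟩
  have hlen : ∀ k, (u k).length = s.length + k := by
    intro k
    induction k with
    | zero => rw [hu0, add_zero]
    | succ k ih => rw [hu, List.length_append, ih, List.length_singleton, add_assoc]
  have hmono : ∀ {k m}, k ≤ m → u k <+: u m := by
    intro k m hkm
    induction m, hkm using Nat.le_induction with
    | base => exact List.prefix_rfl
    | succ m _ ih => exact ih.trans (hu m ▸ List.prefix_append _ _)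
  let ω : ℕ → X := fun n => (u (n + 1))[n]'(by rw [hlen]; omega)
  have hpre : ∀ k, pre ω (s.length + k) = u k := by
    intro k
    refine List.ext_getElem (by simp [hlen]) fun i h₁ h₂ => ?_
    simp only [pre, List.getElem_ofFn, ω]
    rcases le_total (i + 1) k with h | h
    · exact (hmono h).getElem _
    · exact ((hmono h).getElem _).symm
  refine ⟨ω, (hpre 0).trans hu0, fun n hn => ?_⟩
  obtain ⟨k, rfl⟩ := Nat.exists_eq_add_of_le hn
  rw [add_assoc, hpre, hpre, hu]

end Prefix

section Supermartingale

variable {X : Type*} {E : ℕ → (X → EReal) → EReal} {S T : List X → EReal} {s : List X}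

theorem IsOPC.coe_le {Y : Type*} {F : (Y → EReal) → EReal} (hF : IsOPC F) {c : ℝ} {f : Y → EReal}
    (h : ∀ y, (c : EReal) ≤ f y) : (c : EReal) ≤ F f :=
  (hF.2.2.2 c).symm.trans_le (hF.1 _ _ h)

/-- A supermartingale that is below a level stays below it along some path. -/
theorem IsSupermartingale.exists_path_lt (hE : ∀ n, IsOPC (E n)) (hS : IsSupermartingale E S)
    {d : ℝ} (hd : S s < d) :
    ∃ ω ∈ Gamma s, ∀ n ≥ s.length, S (pre ω n) < d := by
  have step : ∀ t, S t < d → ∃ x, S (t ++ [x]) < d := by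
    intro t ht
    by_contra! h
    exact ((hE t.length).coe_le h |>.trans (hS t)).not_gt ht
  obtain ⟨x₀, -⟩ := step s hd
  have step' : ∀ t, ∃ x, S t < d → S (t ++ [x]) < d := by
    intro t
    by_cases ht : S t < d
    · exact (step t ht).imp fun x hx _ => hx
    · exact ⟨x₀, fun h => absurd h ht⟩
  choose g hg using step'
  obtain ⟨ω, hω, hnext⟩ := exists_mem_Gamma_forall g s
  refine ⟨ω, hω, fun n hn => ?_⟩
  induction n, hn using Nat.le_induction with
  | base => rwa [show pre ω s.length = s from hω]
  | succ n hn ih => rw [hnext n hn]; exact hg _ ih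

theorem IsSupermartingale.coe_le_of_le_liminf (hE : ∀ n, IsOPC (E n))
    (hS : IsSupermartingale E S) {c : ℝ}
    (h : ∀ ω ∈ Gamma s, (c : EReal) ≤ liminf (fun n => S (pre ω n)) atTop) :
    (c : EReal) ≤ S s := by
  by_contra! hlt
  obtain ⟨d, hSd, hdc⟩ := EReal.lt_iff_exists_real_btwn.1 hlt
  obtain ⟨ω, hω, hpath⟩ := hS.exists_path_lt hE hSd
  refine ((h ω hω).trans ?_).not_gt hdc
  refine liminf_le_of_frequently_le' (Eventually.frequently ?_)
  filter_upwards [eventually_ge_atTop s.length] with n hn using (hpath n hn).le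

theorem IsSupermartingale.add (hE : ∀ n, IsOPC (E n)) (hS : IsSupermartingale E S)
    (hT : IsSupermartingale E T) (bS : BddBelowFn S) (bT : BddBelowFn T) :
    IsSupermartingale E (fun t => S t + T t) := by
  obtain ⟨c, hc⟩ := bS
  obtain ⟨d, hd⟩ := bT
  intro t
  have h := (hE t.length).2.2.1 (fun x => S (t ++ [x])) (fun x => T (t ++ [x]))
  simp only [upAdd_eq_add_of_ne_bot (ne_bot_of_coe_le (hc _)) (ne_bot_of_coe_le (hd _))] at h
  rw [upAdd_eq_add_of_ne_bot (ne_bot_of_coe_le ((hE _).coe_le fun x => hc _))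
    (ne_bot_of_coe_le ((hE _).coe_le fun x => hd _))] at h
  exact h.trans (add_le_add (hS t) (hT t))

theorem BddBelowFn.add {Y : Type*} {f g : Y → EReal} (hf : BddBelowFn f) (hg : BddBelowFn g) :
    BddBelowFn (fun y => f y + g y) := by
  obtain ⟨c, hc⟩ := hf
  obtain ⟨d, hd⟩ := hg
  exact ⟨c + d, fun y => by rw [EReal.coe_add]; exact add_le_add (hc y) (hd y)⟩

theorem IsSupermartingale.const_mul (hE : ∀ n, IsOPC (E n)) (hS : IsSupermartingale E S)
    {c : ℝ} (hc : 0 < c) : IsSupermartingale E (fun t => (c : EReal) * S t) := by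
  intro t
  rw [(hE t.length).2.1 c hc]
  exact mul_le_mul_of_nonneg_left (hS t) (EReal.coe_nonneg.2 hc.le)

theorem IsSupermartingale.eseries (hE : ∀ n, IsSuperexpectation (E n)) {S : ℕ → List X → EReal}
    (hS : ∀ k, IsSupermartingale E (S k)) (h0 : ∀ k t, 0 ≤ S k t) :
    IsSupermartingale E (fun t => eseries fun k => S k t) := fun t =>
  ((hE t.length).2 (fun k x => S k (t ++ [x])) fun k _ => h0 k _).trans
    (eseries_mono fun k => hS k t)

open Classical in
/-- A supermartingale stays one when it is made infinite off the extensions of a situation. -/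
theorem IsSupermartingale.ite_isPrefix_top (hS : IsSupermartingale E S) (s : List X) :
    IsSupermartingale E (fun t => if s <+: t then S t else ⊤) := by
  intro t
  by_cases ht : s <+: t
  · simp only [ht, ht.trans (List.prefix_append _ _), if_true]
    exact hS t
  · simp [ht]

end Supermartingale

section UpExp

variable {X : Type*} {E : ℕ → (X → EReal) → EReal} {s : List X} {ξ η : (ℕ → X) → EReal}

theorem upExp_le {S : List X → EReal} (hS : IsSupermartingale E S) (bS : BddBelowFn S)
    (h : ∀ ω ∈ Gamma s, ξ ω ≤ liminf (fun n => S (pre ω n)) atTop) : upExp E ξ s ≤ S s :=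
  sInf_le ⟨S, hS, bS, h, rfl⟩

theorem exists_supermartingale_lt {a : EReal} (h : upExp E ξ s < a) :
    ∃ S, IsSupermartingale E S ∧ BddBelowFn S ∧
      (∀ ω ∈ Gamma s, ξ ω ≤ liminf (fun n => S (pre ω n)) atTop) ∧ S s < a := by
  obtain ⟨_, ⟨S, hS, bS, hl, rfl⟩, hlt⟩ := sInf_lt_iff.1 h
  exact ⟨S, hS, bS, hl, hlt⟩

theorem upExp_mono (h : ∀ ω, ξ ω ≤ η ω) : upExp E ξ s ≤ upExp E η s := by
  refine sInf_le_sInf ?_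
  rintro _ ⟨S, hS, bS, hl, rfl⟩
  exact ⟨S, hS, bS, fun ω hω => (h ω).trans (hl ω hω), rfl⟩

theorem coe_le_upExp (hE : ∀ n, IsOPC (E n)) {c : ℝ} (h : ∀ ω, (c : EReal) ≤ ξ ω) :
    (c : EReal) ≤ upExp E ξ s := by
  refine le_sInf ?_
  rintro _ ⟨S, hS, -, hl, rfl⟩
  exact hS.coe_le_of_le_liminf hE fun ω hω => (h ω).trans (hl ω hω)

theorem upExp_nonneg (hE : ∀ n, IsOPC (E n)) (h : ∀ ω, 0 ≤ ξ ω) : 0 ≤ upExp E ξ s :=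
  coe_le_upExp (c := 0) hE (by simpa using h)

theorem upExp_const (hE : ∀ n, IsOPC (E n)) (c : ℝ) : upExp E (fun _ => (c : EReal)) s = c := by
  refine le_antisymm ?_ (coe_le_upExp hE fun _ => le_rfl)
  refine upExp_le (S := fun _ => (c : EReal)) (fun t => ?_) ⟨c, fun _ => le_rfl⟩ fun ω _ => ?_
  · exact ((hE t.length).2.2.2 c).le
  · simp

theorem upExp_const_mul_le (hE : ∀ n, IsOPC (E n)) {c : ℝ} (hc : 0 < c) :
    upExp E (fun ω => (c : EReal) * ξ ω) s ≤ (c : EReal) * upExp E ξ s := by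
  have hc' : (0 : EReal) < c := EReal.coe_pos.2 hc
  rw [← EReal.div_le_iff_le_mul hc' (EReal.coe_ne_top c)]
  refine le_sInf ?_
  rintro _ ⟨S, hS, ⟨b, hb⟩, hl, rfl⟩
  rw [EReal.div_le_iff_le_mul hc' (EReal.coe_ne_top c)]
  refine upExp_le (hS.const_mul hE hc) ⟨c * b, fun t => ?_⟩ fun ω hω => ?_
  · rw [EReal.coe_mul]
    exact mul_le_mul_of_nonneg_left (hb t) hc'.le
  · rw [EReal.liminf_const_mul_of_nonneg_of_ne_top hc'.le (EReal.coe_ne_top c)]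
    exact mul_le_mul_of_nonneg_left (hl ω hω) hc'.le

theorem upExp_const_mul (hE : ∀ n, IsOPC (E n)) {c : ℝ} (hc : 0 < c) :
    upExp E (fun ω => (c : EReal) * ξ ω) s = (c : EReal) * upExp E ξ s := by
  refine le_antisymm (upExp_const_mul_le hE hc) ?_
  have hcancel : ∀ d : ℝ, 0 < d → ∀ a : EReal, (d⁻¹ : ℝ) * ((d : EReal) * a) = a := by
    intro d hd a
    rw [← mul_assoc, ← EReal.coe_mul, inv_mul_cancel₀ hd.ne', EReal.coe_one, one_mul]
  have h := upExp_const_mul_le (s := s) (ξ := fun ω => (c : EReal) * ξ ω) hE (inv_pos.2 hc)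
  simp only [hcancel c hc] at h
  have h' := mul_le_mul_of_nonneg_left h (EReal.coe_nonneg.2 hc.le)
  rwa [← mul_assoc (c : EReal) (c⁻¹ : ℝ), ← EReal.coe_mul, mul_inv_cancel₀ hc.ne', EReal.coe_one,
    one_mul] at h'

theorem upExp_upAdd_le (hE : ∀ n, IsOPC (E n)) :
    upExp E (fun ω => upAdd (ξ ω) (η ω)) s ≤ upAdd (upExp E ξ s) (upExp E η s) := by
  refine le_upAdd_of_forall_gt fun a ha b hb => ?_
  obtain ⟨S, hS, bS, hSl, hSa⟩ := exists_supermartingale_lt ha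
  obtain ⟨T, hT, bT, hTl, hTb⟩ := exists_supermartingale_lt hb
  refine le_trans ?_ (add_le_add hSa.le hTb.le)
  refine upExp_le (hS.add hE hT bS bT) (bS.add bT) fun ω hω => ?_
  have liminf_ne_bot : ∀ {U : List X → EReal}, BddBelowFn U →
      liminf (fun n => U (pre ω n)) atTop ≠ ⊥ := by
    rintro U ⟨c, hc⟩
    exact ne_bot_of_coe_le (le_liminf_of_le (h := .of_forall fun n => hc (pre ω n)))
  refine (upAdd_mono (hSl ω hω) (hTl ω hω)).trans ?_
  rw [upAdd_eq_add_of_ne_bot (liminf_ne_bot bS) (liminf_ne_bot bT)]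
  exact EReal.le_liminf_add

theorem isOPC_upExp (hE : ∀ n, IsOPC (E n)) (s : List X) : IsOPC (fun ξ => upExp E ξ s) :=
  ⟨fun _ _ h => upExp_mono h, fun _ hc _ => upExp_const_mul hE hc,
    fun _ _ => upExp_upAdd_le hE, fun c => upExp_const hE c⟩

/-- For a nonnegative variable, the superhedging supermartingale can be taken nonnegative. -/
theorem exists_nonneg_supermartingale_lt (hE : ∀ n, IsOPC (E n)) (hξ : ∀ ω, 0 ≤ ξ ω)
    {a : EReal} (h : upExp E ξ s < a) :
    ∃ S, IsSupermartingale E S ∧ (∀ t, 0 ≤ S t) ∧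
      (∀ ω ∈ Gamma s, ξ ω ≤ liminf (fun n => S (pre ω n)) atTop) ∧ S s < a := by
  classical
  obtain ⟨S, hS, -, hl, hlt⟩ := exists_supermartingale_lt h
  refine ⟨_, hS.ite_isPrefix_top s, fun t => ?_, fun ω hω => (hl ω hω).trans ?_, ?_⟩
  · split_ifs with ht
    · refine hS.coe_le_of_le_liminf (c := 0) hE fun ω hω => ?_
      exact (hξ ω).trans (hl ω (Gamma_anti ht hω))
    · exact le_top
  · refine liminf_le_liminf (.of_forall fun n => ?_)
    split_ifs
    · exact le_rfl
    · exact le_top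
  · simpa using hlt

theorem upExp_eseries_le (hE : ∀ n, IsSuperexpectation (E n)) {ξ : ℕ → (ℕ → X) → EReal}
    (hξ : ∀ k ω, 0 ≤ ξ k ω) :
    upExp E (fun ω => eseries fun k => ξ k ω) s ≤ eseries fun k => upExp E (ξ k) s := by
  have hE' : ∀ n, IsOPC (E n) := fun n => (hE n).1
  have h0 : ∀ k, 0 ≤ upExp E (ξ k) s := fun k => upExp_nonneg hE' (hξ k)
  set A := eseries fun k => upExp E (ξ k) s
  rcases eq_or_ne A ⊤ with htop | htop
  · rw [htop]; exact le_top
  have hne : ∀ k, upExp E (ξ k) s ≠ ⊤ := fun k =>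
    ((le_eseries h0 k).trans_lt (lt_top_iff_ne_top.2 htop)).ne
  have key : ∀ ε : ℝ, 0 < ε → upExp E (fun ω => eseries fun k => ξ k ω) s ≤ A + ε := by
    intro ε hε
    have hlt : ∀ k, upExp E (ξ k) s < upExp E (ξ k) s + ((ε / 2 * (1 / 2) ^ k : ℝ) : EReal) := by
      intro k
      have hpos : (0 : EReal) < ((ε / 2 * (1 / 2) ^ k : ℝ) : EReal) :=
        EReal.coe_pos.2 (by positivity)
      lift upExp E (ξ k) s to ℝ using ⟨hne k, ne_bot_of_coe_le (c := 0) (h0 k)⟩ with r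
      exact_mod_cast lt_add_of_pos_right r (EReal.coe_pos.1 hpos)
    choose S hS S0 hl hSs using fun k => exists_nonneg_supermartingale_lt hE' (hξ k) (hlt k)
    refine (upExp_le (IsSupermartingale.eseries hE hS S0)
      ⟨0, fun t => eseries_nonneg _⟩ fun ω hω => ?_).trans
      (eseries_le_add (fun k => (hSs k).le) fun n => ?_)
    · exact (eseries_mono fun k => hl k ω hω).trans
        (eseries_liminf_le fun k n => S k (pre ω n))
    · rw [← Finset.mul_sum]
      nlinarith [sum_geometric_two_le n]
  have hbot : A ≠ ⊥ := ne_bot_of_coe_le (c := 0) (eseries_nonneg _)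
  clear_value A
  lift A to ℝ using ⟨htop, hbot⟩
  refine le_of_forall_gt_imp_ge_of_dense fun b hb => ?_
  obtain ⟨d, hd, hdb⟩ := EReal.lt_iff_exists_real_btwn.1 hb
  have := key (d - A) (sub_pos.2 (EReal.coe_lt_coe_iff.1 hd))
  rw [← EReal.coe_add, add_sub_cancel] at this
  exact this.trans hdb.le

theorem isSuperexpectation_upExp (hE : ∀ n, IsSuperexpectation (E n)) (s : List X) :
    IsSuperexpectation (fun ξ => upExp E ξ s) :=
  ⟨isOPC_upExp (fun n => (hE n).1) s, fun _ hξ => upExp_eseries_le hE hξ⟩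

theorem indicator_one_nonneg (A : Set (ℕ → X)) (ω : ℕ → X) :
    (0 : EReal) ≤ A.indicator (fun _ => 1) ω :=
  Set.indicator_nonneg (fun _ _ => zero_le_one) ω

theorem upProb_iUnion_le (hE : ∀ n, IsSuperexpectation (E n)) (A : ℕ → Set (ℕ → X)) :
    upProb E (⋃ k, A k) s ≤ eseries fun k => upProb E (A k) s := by
  refine le_trans (upExp_mono fun ω => ?_)
    (upExp_eseries_le hE fun k ω => indicator_one_nonneg (A k) ω)
  by_cases hω : ω ∈ ⋃ k, A k
  · obtain ⟨k, hk⟩ := Set.mem_iUnion.1 hω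
    rw [Set.indicator_of_mem hω]
    refine le_trans ?_ (le_eseries (fun k => indicator_one_nonneg (A k) ω) k)
    rw [Set.indicator_of_mem hk]
  · rw [Set.indicator_of_notMem hω]
    exact eseries_nonneg _

theorem upProb_iUnion_eq_zero (hE : ∀ n, IsSuperexpectation (E n)) {A : ℕ → Set (ℕ → X)}
    (hA : ∀ k, upProb E (A k) s = 0) : upProb E (⋃ k, A k) s = 0 := by
  refine le_antisymm ((upProb_iUnion_le hE A).trans ?_)
    (upExp_nonneg (fun n => (hE n).1) (indicator_one_nonneg _))
  simp [hA, eseries]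

end UpExp

end GTP

theorem upExp_isSuperexpectation {X : Type*} [Nonempty X]
    (E : ℕ → (X → EReal) → EReal) (hE : ∀ n, GTP.IsSuperexpectation (E n)) (s : List X) :
    GTP.IsSuperexpectation (fun ξ : (ℕ → X) → EReal => GTP.upExp E ξ s) ∧
    (∀ ξ : ℕ → (ℕ → X) → EReal, (∀ k ω, 0 ≤ ξ k ω) →
      GTP.upExp E (fun ω => GTP.eseries fun k => ξ k ω) s ≤
        GTP.eseries fun k => GTP.upExp E (ξ k) s) ∧
    (∀ A : ℕ → Set (ℕ → X),
      GTP.upProb E (⋃ k, A k) s ≤ GTP.eseries fun k => GTP.upProb E (A k) s) ∧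
    (∀ A : ℕ → Set (ℕ → X), (∀ k, GTP.upProb E (A k) s = 0) →
      GTP.upProb E (⋃ k, A k) s = 0) :=
  ⟨GTP.isSuperexpectation_upExp hE s, fun _ hξ => GTP.upExp_eseries_le hE hξ,
    GTP.upProb_iUnion_le hE, fun _ hA => GTP.upProb_iUnion_eq_zero hE hA⟩
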